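/- Let n ≤ q be positive integers and let μ be the probability measure on n×q real matrices under which all entries are i.i.d. standard Gaussian N(0,1). Then ∫ log det(X Xᵀ) dμ(X) = Σ_{j=0}^{n−1} (ψ((q−j)/2) + log 2), where ψ(a) = deriv (log ∘ Γ) a is the digamma function. -/

import Mathlib

open MeasureTheory ProbabilityTheory Matrix

/-!
The determinant of `X Xᵀ` is the Gram determinant of the rows of `X`, which are independent standard
Gaussian vectors of `ℝ^q`. Appending a vector `y` to `v₁, …, vⱼ` multiplies their Gram determinant
by the squared norm of the projection of `y` onto the orthogonal complement of the span of the `vᵢ`;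
for Gaussian `y` this factor is chi-squared with `q - j` degrees of freedom, whatever the `vᵢ` are.
Hence `det (X Xᵀ)` is distributed as a product of independent chi-squared variables (Bartlett).

A chi-squared variable is gamma distributed, as its moment generating function shows, and the
expected logarithm of a gamma variable is the derivative at `0` of the cumulant generating function
`t ↦ log Γ(a + t) - log Γ(a) - t log r` of its logarithm.
-/

open Filter
open scoped Topology

theorem mem_interior_integrableExpSet_of_mgf_ne_zero {Ω : Type*} [MeasurableSpace Ω]
    {μ : Measure Ω} {X : Ω → ℝ} {t : ℝ} (h : ∀ᶠ s in 𝓝 t, mgf X μ s ≠ 0) :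
    t ∈ interior (integrableExpSet X μ) :=
  mem_interior_iff_mem_nhds.2 <| h.mono fun _ hs ↦ Integrable.of_integral_ne_zero hs

theorem map_eq_map_of_mgf_eventuallyEq {Ω Ω' : Type*} [MeasurableSpace Ω]
    [MeasurableSpace Ω'] {μ : Measure Ω} {μ' : Measure Ω'} [IsFiniteMeasure μ]
    [IsFiniteMeasure μ'] {X : Ω → ℝ} {Y : Ω' → ℝ} (hX : 0 ∈ interior (integrableExpSet X μ))
    (hY : 0 ∈ interior (integrableExpSet Y μ')) (hXY : mgf X μ =ᶠ[𝓝 0] mgf Y μ') :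
    μ.map X = μ'.map Y := by
  set S := interior (integrableExpSet X μ) ∩ interior (integrableExpSet Y μ')
  have tendsto_ofReal : Tendsto ((↑) : ℝ → ℂ) (𝓝[≠] 0) (𝓝[≠] 0) :=
    tendsto_nhdsWithin_of_tendsto_nhds_of_eventually_within _
      (Complex.continuous_ofReal.tendsto' 0 0 Complex.ofReal_zero |>.mono_left nhdsWithin_le_nhds)
      (eventually_mem_nhdsWithin.mono fun _ ↦ Complex.ofReal_ne_zero.2)
  have frequently_eq : ∃ᶠ z in 𝓝[≠] (0 : ℂ), complexMGF X μ z = complexMGF Y μ' z := by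
    refine tendsto_ofReal.frequently (Eventually.frequently ?_)
    filter_upwards [hXY.filter_mono nhdsWithin_le_nhds] with x hx
    rw [complexMGF_ofReal, complexMGF_ofReal, hx]
  have eqOn_strip : Set.EqOn (complexMGF X μ) (complexMGF Y μ') (Complex.re ⁻¹' S) :=
    (analyticOnNhd_complexMGF.mono fun _ hz ↦ hz.1).eqOn_of_preconnected_of_frequently_eq
      (analyticOnNhd_complexMGF.mono fun _ hz ↦ hz.2)
      ((convex_integrableExpSet.interior.inter convex_integrableExpSet.interior).linear_preimage
        Complex.reLm).isPreconnected
      (by simpa using ⟨hX, hY⟩) frequently_eq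
  refine Measure.ext_of_charFun (funext fun t ↦ ?_)
  rw [← complexMGF_mul_I (aemeasurable_of_mem_interior_integrableExpSet hX),
    ← complexMGF_mul_I (aemeasurable_of_mem_interior_integrableExpSet hY)]
  exact eqOn_strip (by simpa using ⟨hX, hY⟩)

theorem ae_pi_forall {ι : Type*} [Fintype ι] {α : ι → Type*} [∀ i, MeasurableSpace (α i)]
    {ν : ∀ i, Measure (α i)} [∀ i, SigmaFinite (ν i)] {p : ∀ i, α i → Prop}
    (h : ∀ i, ∀ᵐ x ∂ν i, p i x) : ∀ᵐ t ∂Measure.pi ν, ∀ i, p i (t i) :=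
  ae_all_iff.2 fun i ↦ Measure.tendsto_eval_ae_ae.eventually (h i)

theorem map_prod_pi_succ {n : ℕ} {M : Type*} [CommMonoid M] [MeasurableSpace M] [MeasurableMul₂ M]
    (ν : Fin (n + 1) → Measure M) [∀ j, SigmaFinite (ν j)] :
    (Measure.pi ν).map (fun t ↦ ∏ j, t j) =
      (Measure.pi fun j : Fin n ↦ ν j.castSucc).map (fun t ↦ ∏ j, t j) ∗ₘ ν (Fin.last n) := by
  have measurable_prod : Measurable fun t : Fin n → M ↦ ∏ j, t j := by fun_prop
  have preserving :=
    ((measurable_prod.measurePreserving _).prod (.id (ν (Fin.last n)))).comp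
      (Measure.measurePreserving_swap.comp (measurePreserving_piFinSuccAbove ν (Fin.last n)))
  simp only [Fin.succAbove_last] at preserving
  rw [Measure.mconv, ← preserving.map_eq, Measure.map_map (by fun_prop) preserving.measurable]
  simp [Function.comp_def, Fin.prod_univ_castSucc, Fin.init]

theorem integral_log_prod_pi {ι : Type*} [Fintype ι] (ν : ι → Measure ℝ)
    [∀ j, IsProbabilityMeasure (ν j)] (ae_ne_zero : ∀ j, ∀ᵐ x ∂ν j, x ≠ 0)
    (integrable_log : ∀ j, Integrable Real.log (ν j)) :
    ∫ t, Real.log (∏ j, t j) ∂Measure.pi ν = ∑ j, ∫ x, Real.log x ∂ν j := by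
  calc ∫ t, Real.log (∏ j, t j) ∂Measure.pi ν
      = ∫ t, ∑ j, Real.log (t j) ∂Measure.pi ν :=
        integral_congr_ae <| (ae_pi_forall ae_ne_zero).mono fun t ht ↦ Real.log_prod fun j _ ↦ ht j
    _ = ∑ j, ∫ t, Real.log (t j) ∂Measure.pi ν :=
        integral_finsetSum _ fun j _ ↦
          (measurePreserving_eval ν j).integrable_comp_of_integrable (integrable_log j)
    _ = ∑ j, ∫ x, Real.log x ∂ν j := Finset.sum_congr rfl fun j _ ↦ by
        rw [← (measurePreserving_eval ν j).map_eq,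
          integral_map (measurable_pi_apply j).aemeasurable (by fun_prop)]

theorem det_gram_insertNth {𝕜 E : Type*} [RCLike 𝕜] [NormedAddCommGroup E]
    [InnerProductSpace 𝕜 E] {n : ℕ} (v : Fin n → E)
    [(Submodule.span 𝕜 (Set.range v)).HasOrthogonalProjection] (p : Fin (n + 1)) (y : E) :
    (gram 𝕜 (p.insertNth (α := fun _ ↦ E) y v)).det =
      (‖Submodule.orthogonalProjectionOnto (Submodule.span 𝕜 (Set.range v))ᗮ y‖ : 𝕜) ^ 2 *
        (gram 𝕜 v).det := by
  set S := Submodule.span 𝕜 (Set.range v)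
  set u : Fin (n + 1) → E := p.insertNth (α := fun _ ↦ E) y v
  set w := Sᗮ.orthogonalProjectionOnto y
  have u_succAbove (j : Fin n) : u (p.succAbove j) = v j := Fin.insertNth_apply_succAbove ..
  have u_self : u p = y := Fin.insertNth_apply_same ..
  have inner_w (j : Fin n) : inner 𝕜 (v j) (w : E) = 0 :=
    Submodule.inner_right_of_mem_orthogonal (Submodule.subset_span (Set.mem_range_self j)) w.2
  -- Subtracting `∑ j, c j • v j` from `y` is a column operation, which does not change the
  -- determinant.
  obtain ⟨c, hc⟩ : ∃ c : Fin n → 𝕜, ∑ j, c j • v j = S.starProjection y :=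
    (Submodule.mem_span_range_iff_exists_fun 𝕜).1 (S.starProjection_apply_mem y)
  have w_eq : (w : E) = y - ∑ j, c j • v j := by
    rw [hc]
    exact S.starProjection_orthogonal_val y
  have column_eq (i : Fin (n + 1)) : inner 𝕜 (u i) (w : E) =
      ∑ k, p.insertNth (α := fun _ ↦ 𝕜) 1 (-c) k • gram 𝕜 u i k := by
    simp [Fin.sum_univ_succAbove _ p, u_self, u_succAbove, w_eq, inner_sub_right, inner_sum,
      inner_smul_right, ← sub_eq_add_neg]
  have minor_eq : (gram 𝕜 u).submatrix p.succAbove p.succAbove = gram 𝕜 v := by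
    ext i j
    simp [u_succAbove]
  calc (gram 𝕜 u).det
      = ((gram 𝕜 u).updateCol p fun i ↦ inner 𝕜 (u i) (w : E)).det := by
        simp only [column_eq, det_updateCol_sum, Fin.insertNth_apply_same, one_smul]
    _ = inner 𝕜 y (w : E) * (gram 𝕜 v).det := by
        rw [det_succ_column _ p, Fin.sum_univ_succAbove _ p]
        simp [u_self, u_succAbove, inner_w, submatrix_updateCol_succAbove, minor_eq]
    _ = (‖w‖ : 𝕜) ^ 2 * (gram 𝕜 v).det := by
        rw [← inner_self_eq_norm_sq_to_K, Submodule.inner_orthogonalProjectionOnto_eq_of_mem_right]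

theorem measurable_det_gram {𝕜 E ι : Type*} [RCLike 𝕜] [NormedAddCommGroup E]
    [InnerProductSpace 𝕜 E] [MeasurableSpace E] [OpensMeasurableSpace E]
    [SecondCountableTopology E] [Fintype ι] [DecidableEq ι] :
    Measurable fun v : ι → E ↦ (gram 𝕜 v).det := by
  simp only [det_apply, gram_apply]
  fun_prop

section GammaDistribution

variable {a r t : ℝ}

theorem integral_gammaMeasure (ha : 0 < a) (hr : 0 < r) {F : Type*}
    [NormedAddCommGroup F] [NormedSpace ℝ F] (f : ℝ → F) :
    ∫ x, f x ∂gammaMeasure a r =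
      (r ^ a / Real.Gamma a) • ∫ x in Set.Ioi 0, (x ^ (a - 1) * Real.exp (-(r * x))) • f x := by
  have density_smul (x : ℝ) : (gammaPDF a r x).toReal • f x = (Set.Ici 0).indicator
      (fun x ↦ (r ^ a / Real.Gamma a) • (x ^ (a - 1) * Real.exp (-(r * x))) • f x) x := by
    rw [gammaPDF, ENNReal.toReal_ofReal (gammaPDFReal_nonneg ha hr x), gammaPDFReal]
    by_cases hx : 0 ≤ x <;> simp [hx, mul_assoc, mul_smul]
  rw [gammaMeasure, integral_withDensity_eq_integral_toReal_smul (by unfold gammaPDF; fun_prop)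
    (by simp [gammaPDF])]
  simp_rw [density_smul]
  rw [integral_indicator measurableSet_Ici, integral_Ici_eq_integral_Ioi, integral_smul]

theorem mgf_id_gammaMeasure (ha : 0 < a) (hr : 0 < r) (ht : t < r) :
    mgf id (gammaMeasure a r) t = (r / (r - t)) ^ a := by
  have hrt : 0 < r - t := sub_pos.2 ht
  have combine_exp (x : ℝ) : x ^ (a - 1) * Real.exp (-(r * x)) * Real.exp (t * id x) =
      x ^ (a - 1) * Real.exp (-((r - t) * x)) := by
    rw [mul_assoc, ← Real.exp_add, id]
    ring_nf
  rw [mgf, integral_gammaMeasure ha hr]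
  simp_rw [smul_eq_mul, combine_exp]
  rw [Real.integral_rpow_mul_exp_neg_mul_Ioi ha hrt, Real.div_rpow hr.le hrt.le,
    Real.div_rpow zero_le_one hrt.le, Real.one_rpow]
  field_simp [(Real.Gamma_pos_of_pos ha).ne']

theorem mgf_log_gammaMeasure (ha : 0 < a) (hr : 0 < r) (ht : -a < t) :
    mgf Real.log (gammaMeasure a r) t = Real.Gamma (a + t) / Real.Gamma a * r ^ (-t) := by
  have combine_rpow : ∀ x ∈ Set.Ioi (0 : ℝ),
      x ^ (a - 1) * Real.exp (-(r * x)) * Real.exp (t * Real.log x) =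
        x ^ (a + t - 1) * Real.exp (-(r * x)) := fun x (hx : 0 < x) ↦ by
    rw [mul_comm t, ← Real.rpow_def_of_pos hx, mul_right_comm, ← Real.rpow_add hx]
    ring_nf
  rw [mgf, integral_gammaMeasure ha hr]
  simp_rw [smul_eq_mul]
  rw [setIntegral_congr_fun measurableSet_Ioi combine_rpow,
    Real.integral_rpow_mul_exp_neg_mul_Ioi (by linarith) hr, one_div, Real.inv_rpow hr.le,
    Real.rpow_add hr, Real.rpow_neg hr.le]
  field_simp

theorem ae_ne_zero_gammaMeasure (a r : ℝ) : ∀ᵐ x ∂gammaMeasure a r, x ≠ 0 :=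
  (withDensity_absolutelyContinuous _ _).ae_le (Measure.ae_ne volume 0)

theorem zero_mem_interior_integrableExpSet_log_gammaMeasure (ha : 0 < a) (hr : 0 < r) :
    0 ∈ interior (integrableExpSet Real.log (gammaMeasure a r)) := by
  refine mem_interior_integrableExpSet_of_mgf_ne_zero ?_
  filter_upwards [lt_mem_nhds (neg_lt_zero.2 ha)] with t ht
  rw [mgf_log_gammaMeasure ha hr ht]
  have := Real.Gamma_pos_of_pos (neg_lt_iff_pos_add'.1 ht)
  have := Real.Gamma_pos_of_pos ha
  positivity

theorem integrable_log_gammaMeasure (ha : 0 < a) (hr : 0 < r) :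
    Integrable Real.log (gammaMeasure a r) :=
  integrable_of_mem_interior_integrableExpSet
    (zero_mem_interior_integrableExpSet_log_gammaMeasure ha hr)

theorem integral_log_gammaMeasure (ha : 0 < a) (hr : 0 < r) :
    ∫ x, Real.log x ∂gammaMeasure a r = deriv (Real.log ∘ Real.Gamma) a - Real.log r := by
  have := isProbabilityMeasure_gammaMeasure ha hr
  have cgf_eq : cgf Real.log (gammaMeasure a r) =ᶠ[𝓝 0] fun t ↦
      (Real.log ∘ Real.Gamma) (a + t) - Real.log (Real.Gamma a) - t * Real.log r := by
    filter_upwards [lt_mem_nhds (neg_lt_zero.2 ha)] with t ht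
    have hat := Real.Gamma_pos_of_pos (neg_lt_iff_pos_add'.1 ht)
    have hΓa := Real.Gamma_pos_of_pos ha
    rw [cgf, mgf_log_gammaMeasure ha hr ht, Real.log_mul (by positivity) (by positivity),
      Real.log_div hat.ne' hΓa.ne', Real.log_rpow hr, Function.comp_apply]
    ring
  have hasDerivAt_logGamma :
      HasDerivAt (Real.log ∘ Real.Gamma) (deriv (Real.log ∘ Real.Gamma) a) (a + 0) := by
    rw [add_zero]
    exact ((Real.differentiableAt_Gamma fun m ↦ by
      linarith [m.cast_nonneg (α := ℝ)]).log
      (Real.Gamma_pos_of_pos ha).ne').hasDerivAt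
  rw [← div_one (∫ x, _ ∂_), ← probReal_univ (μ := gammaMeasure a r), ← deriv_cgf_zero
    (zero_mem_interior_integrableExpSet_log_gammaMeasure ha hr), cgf_eq.deriv_eq]
  simpa [Pi.sub_def] using (((hasDerivAt_logGamma.comp_const_add a 0).sub_const _).sub
    ((hasDerivAt_id 0).mul_const (Real.log r))).deriv

end GammaDistribution

section ChiSquared

-- For `1 / 2 ≤ t` both sides take the junk value `0`.
theorem mgf_sq_gaussianReal (t : ℝ) :
    mgf (fun x ↦ x ^ 2) (gaussianReal 0 1) t = ((1 / 2) / (1 / 2 - t)) ^ (1 / 2 : ℝ) := by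
  have combine_exp (x : ℝ) : gaussianPDFReal 0 1 x • Real.exp (t * x ^ 2) =
      (√(2 * Real.pi))⁻¹ * Real.exp (-(1 / 2 - t) * x ^ 2) := by
    rw [gaussianPDFReal, smul_eq_mul, mul_assoc, ← Real.exp_add,
      NNReal.coe_one]
    ring_nf
  rw [mgf, integral_gaussianReal_eq_integral_smul one_ne_zero]
  simp_rw [combine_exp]
  rw [integral_const_mul, integral_gaussian, ← Real.sqrt_eq_rpow, ← Real.sqrt_inv,
    ← Real.sqrt_mul (by positivity)]
  field_simp

/-- The chi-squared distribution with `k` degrees of freedom: the law of the squared norm of a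
standard Gaussian vector in `ℝᵏ`, hence the Dirac mass at `0` for `k = 0`. -/
noncomputable def chiSquared (k : ℕ) : Measure ℝ :=
  (stdGaussian (EuclideanSpace ℝ (Fin k))).map fun x ↦ ‖x‖ ^ 2

instance isProbabilityMeasure_chiSquared (k : ℕ) : IsProbabilityMeasure (chiSquared k) :=
  Measure.isProbabilityMeasure_map (by fun_prop)

theorem map_norm_sq_stdGaussian (E : Type*) [NormedAddCommGroup E] [InnerProductSpace ℝ E]
    [FiniteDimensional ℝ E] [MeasurableSpace E] [BorelSpace E] :
    (stdGaussian E).map (fun x ↦ ‖x‖ ^ 2) = chiSquared (Module.finrank ℝ E) := by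
  rw [chiSquared, ← stdGaussian_map (stdOrthonormalBasis ℝ E).repr,
    Measure.map_map (by fun_prop) (by fun_prop)]
  simp [Function.comp_def]

theorem mgf_id_chiSquared (k : ℕ) {t : ℝ} (ht : t < 1 / 2) :
    mgf id (chiSquared k) t = ((1 / 2) / (1 / 2 - t)) ^ (k / 2 : ℝ) := by
  have exp_norm_sq (x : Fin k → ℝ) : Real.exp (t * id (‖WithLp.toLp 2 x‖ ^ 2)) =
      ∏ i, Real.exp (t * x i ^ 2) := by
    simp [EuclideanSpace.norm_sq_eq, Finset.mul_sum, Real.exp_sum]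
  rw [mgf, chiSquared, ← map_pi_eq_stdGaussian, Measure.map_map (by fun_prop) (by fun_prop),
    integral_map (by fun_prop) (by fun_prop)]
  simp only [Function.comp_apply, exp_norm_sq]
  rw [integral_fintype_prod_eq_prod (𝕜 := ℝ) (f := fun (_ : Fin k) x ↦ Real.exp (t * x ^ 2))]
  have pos : 0 ≤ 1 / 2 / (1 / 2 - t) := by have := sub_pos.2 ht; positivity
  have := mgf_sq_gaussianReal t
  rw [mgf] at this
  rw [Finset.prod_const, this, ← Real.rpow_mul_natCast pos, Finset.card_univ, Fintype.card_fin]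
  ring_nf

theorem chiSquared_eq_gammaMeasure {k : ℕ} (hk : k ≠ 0) :
    chiSquared k = gammaMeasure (k / 2) (1 / 2) := by
  have hk' : (0 : ℝ) < k / 2 := by positivity
  have := isProbabilityMeasure_gammaMeasure hk' one_half_pos
  have lt_half : ∀ᶠ t : ℝ in 𝓝 0, t < 1 / 2 := gt_mem_nhds one_half_pos
  have mgf_pos {t : ℝ} (ht : t < 1 / 2) : ((1 / 2) / (1 / 2 - t)) ^ (k / 2 : ℝ) ≠ 0 := by
    have := sub_pos.2 ht
    positivity
  simpa using map_eq_map_of_mgf_eventuallyEq (X := id) (Y := id)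
    (mem_interior_integrableExpSet_of_mgf_ne_zero <| lt_half.mono fun t ht ↦
      (mgf_id_chiSquared k ht).trans_ne (mgf_pos ht))
    (mem_interior_integrableExpSet_of_mgf_ne_zero <| lt_half.mono fun t ht ↦
      (mgf_id_gammaMeasure hk' one_half_pos ht).trans_ne (mgf_pos ht))
    (lt_half.mono fun t ht ↦
      (mgf_id_chiSquared k ht).trans (mgf_id_gammaMeasure hk' one_half_pos ht).symm)

variable {k : ℕ}

theorem ae_ne_zero_chiSquared (hk : k ≠ 0) : ∀ᵐ x ∂chiSquared k, x ≠ 0 :=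
  chiSquared_eq_gammaMeasure hk ▸ ae_ne_zero_gammaMeasure _ _

theorem integrable_log_chiSquared (hk : k ≠ 0) : Integrable Real.log (chiSquared k) :=
  chiSquared_eq_gammaMeasure hk ▸ integrable_log_gammaMeasure (by positivity) one_half_pos

theorem integral_log_chiSquared (hk : k ≠ 0) :
    ∫ x, Real.log x ∂chiSquared k = deriv (Real.log ∘ Real.Gamma) (k / 2) + Real.log 2 := by
  rw [chiSquared_eq_gammaMeasure hk, integral_log_gammaMeasure (by positivity) one_half_pos,
    one_div, Real.log_inv, sub_neg_eq_add]

end ChiSquared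

section Bartlett

variable {E : Type*} [NormedAddCommGroup E] [InnerProductSpace ℝ E] [FiniteDimensional ℝ E]
  [MeasurableSpace E] [BorelSpace E] {n : ℕ}

theorem map_orthogonalProjectionOnto_stdGaussian (K : Submodule ℝ E) :
    (stdGaussian E).map K.orthogonalProjectionOnto = stdGaussian K := by
  refine Measure.ext_of_charFun (funext fun t ↦ ?_)
  rw [charFun_apply, integral_map (by fun_prop) (by fun_prop)]
  simp only [Submodule.inner_orthogonalProjectionOnto_eq_of_mem_right, ← charFun_apply]
  rw [charFun_stdGaussian, charFun_stdGaussian, Submodule.coe_norm]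

theorem map_norm_sq_orthogonalProjectionOnto_stdGaussian (K : Submodule ℝ E) :
    (stdGaussian E).map (fun y ↦ ‖K.orthogonalProjectionOnto y‖ ^ 2) =
      chiSquared (Module.finrank ℝ K) := by
  rw [← map_norm_sq_stdGaussian, ← map_orthogonalProjectionOnto_stdGaussian,
    Measure.map_map (by fun_prop) (by fun_prop)]
  rfl

theorem map_det_gram_insertNth_div {v : Fin n → E} (hv : (gram ℝ v).det ≠ 0) (p : Fin (n + 1)) :
    (stdGaussian E).map
        (fun y ↦ (gram ℝ (p.insertNth (α := fun _ ↦ E) y v)).det / (gram ℝ v).det) =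
      chiSquared (Module.finrank ℝ E - n) := by
  set S := Submodule.span ℝ (Set.range v)
  have finrank_orthogonal : Module.finrank ℝ Sᗮ = Module.finrank ℝ E - n := by
    rw [← S.finrank_add_finrank_orthogonal,
      finrank_span_eq_card (linearIndependent_of_det_gram_ne_zero hv), Fintype.card_fin,
      Nat.add_sub_cancel_left]
  rw [← finrank_orthogonal, ← map_norm_sq_orthogonalProjectionOnto_stdGaussian]
  simp only [det_gram_insertNth, mul_div_cancel_right₀ _ hv, RCLike.ofReal_real_eq_id, id]
  rfl

theorem map_det_gram_pi_stdGaussian_succ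
    (h : ∀ᵐ v ∂Measure.pi fun _ : Fin n ↦ stdGaussian E, (gram ℝ v).det ≠ 0) :
    (Measure.pi fun _ : Fin (n + 1) ↦ stdGaussian E).map (fun v ↦ (gram ℝ v).det) =
      (Measure.pi fun _ : Fin n ↦ stdGaussian E).map (fun v ↦ (gram ℝ v).det) ∗ₘ
        chiSquared (Module.finrank ℝ E - n) := by
  -- Given the first `n` vectors, the ratio of the determinants is chi-squared with a law not
  -- depending on them, so it is independent of the first determinant.
  let split := MeasurableEquiv.piFinSuccAbove (fun _ : Fin (n + 1) ↦ E) (Fin.last n)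
  let ratio (v : Fin n → E) (y : E) : ℝ :=
    (gram ℝ ((Fin.last n).insertNth (α := fun _ ↦ E) y v)).det / (gram ℝ v).det
  have measurable_det : Measurable fun v : Fin n → E ↦ (gram ℝ v).det := measurable_det_gram
  have measurable_ratio : Measurable (Function.uncurry ratio) := by
    have : Measurable fun z : (Fin n → E) × E ↦ split.symm z.swap := by fun_prop
    exact (measurable_det_gram.comp this).div (measurable_det.comp measurable_fst)
  have preserving := ((measurable_det.measurePreserving _).skew_product measurable_ratio
    (h.mono fun v hv ↦ map_det_gram_insertNth_div hv (Fin.last n))).comp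
      (Measure.measurePreserving_swap.comp
        (measurePreserving_piFinSuccAbove (fun _ : Fin (n + 1) ↦ stdGaussian E) (Fin.last n)))
  have det_mul_ratio (v : Fin n → E) (y : E) : (gram ℝ v).det * ratio v y =
      (gram ℝ ((Fin.last n).insertNth (α := fun _ ↦ E) y v)).det :=
    mul_div_cancel_of_imp' fun hv ↦ by rw [det_gram_insertNth, hv, mul_zero]
  rw [Measure.mconv, ← preserving.map_eq, Measure.map_map (by fun_prop) preserving.measurable]
  refine congrArg (Measure.map · _) (funext fun v ↦ ?_)
  rw [← (Fin.last n).insertNth_self_removeNth v, ← det_mul_ratio]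
  simp [Function.comp_def]

theorem map_det_gram_pi_stdGaussian (hn : n ≤ Module.finrank ℝ E) :
    (Measure.pi fun _ : Fin n ↦ stdGaussian E).map (fun v ↦ (gram ℝ v).det) =
      (Measure.pi fun j : Fin n ↦ chiSquared (Module.finrank ℝ E - j)).map
        (fun t ↦ ∏ j, t j) := by
  induction n with
  | zero => simp [Measure.map_const]
  | succ n ih =>
    specialize ih (by lia)
    have ae_det_ne_zero : ∀ᵐ v ∂Measure.pi fun _ : Fin n ↦ stdGaussian E, (gram ℝ v).det ≠ 0 := by
      refine ae_of_ae_map measurable_det_gram.aemeasurable (p := (· ≠ 0)) ?_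
      rw [ih, ae_map_iff (p := (· ≠ 0)) (by fun_prop) (measurableSet_singleton 0).compl]
      refine (ae_pi_forall fun j ↦ ae_ne_zero_chiSquared (by lia)).mono fun t ht ↦ ?_
      exact Finset.prod_ne_zero_iff.2 fun j _ ↦ ht j
    rw [map_prod_pi_succ, map_det_gram_pi_stdGaussian_succ ae_det_ne_zero, ih]
    rfl

theorem map_det_mul_transpose_pi_gaussianReal {q : ℕ} (hnq : n ≤ q) :
    (Measure.pi fun _ : Fin n ↦ Measure.pi fun _ : Fin q ↦ gaussianReal 0 1).map
        (fun X ↦ (of X * (of X)ᵀ).det) =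
      (Measure.pi fun j : Fin n ↦ chiSquared (q - j)).map (fun t ↦ ∏ j, t j) := by
  have rows_toLp : MeasurePreserving
      (fun (X : Fin n → Fin q → ℝ) i ↦ WithLp.toLp 2 (X i))
      (Measure.pi fun _ ↦ Measure.pi fun _ ↦ gaussianReal 0 1)
      (Measure.pi fun _ ↦ stdGaussian (EuclideanSpace ℝ (Fin q))) :=
    measurePreserving_pi _ _ fun _ ↦ ⟨by fun_prop, map_pi_eq_stdGaussian⟩
  have mul_transpose_eq_gram (X : Fin n → Fin q → ℝ) :
      of X * (of X)ᵀ = gram ℝ fun i ↦ WithLp.toLp 2 (X i) := by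
    ext i j
    simp [mul_apply, mul_comm, PiLp.inner_apply]
  have := map_det_gram_pi_stdGaussian (E := EuclideanSpace ℝ (Fin q)) (n := n) (by simpa)
  rw [finrank_euclideanSpace_fin, ← rows_toLp.map_eq,
    Measure.map_map measurable_det_gram rows_toLp.measurable] at this
  simpa only [mul_transpose_eq_gram, Function.comp_def] using this

end Bartlett

/-- Expected log-determinant of a Wishart matrix: for `1 ≤ n ≤ q` and `X` an `n × q`
matrix of i.i.d. standard Gaussians,
`E_X log det (X Xᵀ) = Σ_{j<n} (ψ((q-j)/2) + log 2)`,
where `ψ = deriv (log ∘ Γ)` is the digamma function. -/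
theorem expected_log_det_wishart {n q : ℕ} (hn : 1 ≤ n) (hnq : n ≤ q) :
    ∫ X : Fin n → Fin q → ℝ,
        Real.log (Matrix.of X * (Matrix.of X)ᵀ).det
      ∂(Measure.pi fun _ : Fin n => Measure.pi fun _ : Fin q => gaussianReal 0 1) =
      ∑ j ∈ Finset.range n,
        (deriv (Real.log ∘ Real.Gamma) (((q : ℝ) - j) / 2) + Real.log 2) := by
  have dof_ne_zero (j : Fin n) : q - j ≠ 0 := by lia
  have measurable_det : Measurable fun X : Fin n → Fin q → ℝ ↦ (of X * (of X)ᵀ).det := by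
    have : Continuous fun X : Fin n → Fin q → ℝ ↦ (of X * (of X)ᵀ).det := by fun_prop
    exact this.measurable
  calc
    _ = ∫ t, Real.log (∏ j, t j) ∂Measure.pi fun j : Fin n ↦ chiSquared (q - j) := by
      rw [← integral_map (f := Real.log) measurable_det.aemeasurable (by fun_prop),
        map_det_mul_transpose_pi_gaussianReal hnq, integral_map (by fun_prop) (by fun_prop)]
    _ = ∑ j : Fin n, ∫ x, Real.log x ∂chiSquared (q - j) :=
      integral_log_prod_pi _ (fun j ↦ ae_ne_zero_chiSquared (dof_ne_zero j))
        fun j ↦ integrable_log_chiSquared (dof_ne_zero j)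
    _ = ∑ j : Fin n, (deriv (Real.log ∘ Real.Gamma) (((q : ℝ) - j) / 2) + Real.log 2) :=
      Finset.sum_congr rfl fun j _ ↦ by
        rw [integral_log_chiSquared (dof_ne_zero j), Nat.cast_sub (by lia)]
    _ = _ := Fin.sum_univ_eq_sum_range
      (fun j ↦ deriv (Real.log ∘ Real.Gamma) (((q : ℝ) - j) / 2) + Real.log 2) n
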